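/- Let K ≥ 2, n ≥ 1, N = Kn, d > K, and 0 < τ < 2(d−2)/(1 + (K mod 2)/K). Then every local minimizer (W,H) of f restricted to OB(d,K) × OB(d,N) (i.e., every point of the constraint set having a relative neighborhood on which f(W,H) is minimal) is a global minimizer of f over OB(d,K) × OB(d,N); in particular it attains the value log(1 + (K−1)·exp(−Kτ/(K−1))) and satisfies the neural collapse conditions (NC1), (NC2), (NC3). -/

import Mathlib

/-!
The loss is convex in the logit matrix `M = τ Wᵀ H`; write `G` for its gradient in `M`. The
factorisation of `M` has rank to spare because `d > K`, which makes local minimizers global.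

* Since `K < d`, some `a ≠ 0` is orthogonal to every `w_ℓ`. At a local minimizer it is also
  orthogonal to every `h_j` (`orth_H`): stationarity in `h_j` reads `τ W G_j = β_j h_j`, so
  `⟨a, h_j⟩ ≠ 0` would give `β_j = 0`, that is `∑ p_ℓ w_ℓ = w_k` with positive softmax weights `p`.
  All the unit vectors `w_ℓ` would then coincide, and such a point is not a local minimizer with
  `⟨a, h_j⟩ ≠ 0` (`orth_of_const`).
* Moving `w_ℓ` by `√t u_ℓ a` and `h_j` by `√t v_j a`, and renormalising, changes `M` to first order
  in `t`. Minimality along these curves says that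
  `∑ G_{ℓj} (2 τ u_ℓ v_j - (u_ℓ² + v_j²) M_{ℓj}) ≥ 0` for all `u, v` (`second_order`).
* For a competitor `(W', H')`, taking `u, v` to be the rows of `W'`, `H'` and summing over the rows
  gives `⟨G, M' - M⟩ ≥ 0`, because the columns have norm one. Convexity yields
  `f (W, H) ≤ f (W', H')` (`global_of_locMin`).

For the value, the tangent plane of the loss at the simplex logits together with a completed square
gives `f ≥ log (1 + (K-1) exp (-Kτ/(K-1)))`, with equality only for neural collapse
(`collapse_of_le`), and a simplex equiangular tight frame attains this bound (`exists_risk_le`).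
-/

open scoped BigOperators Matrix

/-- Cross-entropy loss: `L_CE(z,k) = log (∑_ℓ exp (z_ℓ)) − z_k`. -/
noncomputable def LCE {K : ℕ} (z : Fin K → ℝ) (k : Fin K) : ℝ :=
  Real.log (∑ ℓ, Real.exp (z ℓ)) - z k

/-- The oblique manifold: matrices all of whose columns have unit Euclidean norm. -/
def OB (p : ℕ) (ι : Type) [Fintype ι] : Set (Matrix (Fin p) ι ℝ) :=
  {M | ∀ j, ∑ i, (M i j) ^ 2 = 1}

/-- The cross-entropy risk `f(W,H) = (1/N) ∑_k ∑_i L_CE(τ Wᵀ h_{k,i}, k)` with `N = K n`. -/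
noncomputable def ceRisk {d K n : ℕ} (τ : ℝ) (W : Matrix (Fin d) (Fin K) ℝ)
    (H : Matrix (Fin d) (Fin K × Fin n) ℝ) : ℝ :=
  (1 / ((K : ℝ) * n)) * ∑ k : Fin K, ∑ i : Fin n,
    LCE (fun ℓ => τ * ∑ r, W r ℓ * H r (k, i)) k

/-- Class-mean matrix: the `k`-th column is `h̄_k = (1/n) ∑_i h_{k,i}`. -/
noncomputable def hbar {d K n : ℕ} (H : Matrix (Fin d) (Fin K × Fin n) ℝ) :
    Matrix (Fin d) (Fin K) ℝ :=
  fun r k => (1 / (n : ℝ)) * ∑ i, H r (k, i)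

/-- The neural collapse conditions (NC1), (NC2), (NC3). -/
noncomputable def NeuralCollapse {d K n : ℕ} (W : Matrix (Fin d) (Fin K) ℝ)
    (H : Matrix (Fin d) (Fin K × Fin n) ℝ) : Prop :=
  (∀ k i r, H r (k, i) = hbar H r k) ∧
  (hbar H ∈ OB d (Fin K) ∧
    (hbar H)ᵀ * hbar H =
      ((K : ℝ) - 1)⁻¹ •
        ((K : ℝ) • (1 : Matrix (Fin K) (Fin K) ℝ) - Matrix.of fun _ _ => (1 : ℝ))) ∧
  (∀ r k, W r k = hbar H r k)

open Filter Topology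

/-! ### Cross-entropy loss: convexity, derivative, tangent planes -/

/-- The softmax `exp (z_ℓ) / ∑ exp (z_m)`. -/
noncomputable def smax {K : ℕ} (z : Fin K → ℝ) (ℓ : Fin K) : ℝ :=
  Real.exp (z ℓ) / ∑ m, Real.exp (z m)

/-- The gradient of `LCE · k` at `z`: softmax minus the one-hot vector of `k`. -/
noncomputable def gCE {K : ℕ} (z : Fin K → ℝ) (k ℓ : Fin K) : ℝ :=
  smax z ℓ - if ℓ = k then 1 else 0

/-- The matrix `X` with each column divided by its Euclidean norm. -/
noncomputable def nrm {d : ℕ} {ι : Type} (X : Matrix (Fin d) ι ℝ) : Matrix (Fin d) ι ℝ :=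
  fun r j => X r j / √(∑ i, X i j ^ 2)

/-- Jensen inequality for `log` at the points `exp (t_i)`, with its case of equality. -/
lemma gibbs {ι : Type} [Fintype ι] (q t : ι → ℝ) (hq : ∀ i, 0 < q i) (hs : ∑ i, q i = 1) :
    ∑ i, q i * t i ≤ Real.log (∑ i, q i * Real.exp (t i)) ∧
    (∑ i, q i * t i = Real.log (∑ i, q i * Real.exp (t i)) → ∀ i, t i = ∑ i, q i * t i) := by
  set m := ∑ i, q i * t i with hm
  have hne : Nonempty ι := by
    by_contra h
    rw [not_nonempty_iff] at h
    simp at hs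
  have hpos : 0 < ∑ i, q i * Real.exp (t i) :=
    Finset.sum_pos (fun i _ => mul_pos (hq i) (Real.exp_pos _)) Finset.univ_nonempty
  have hterm : ∀ i, 0 ≤ q i * (Real.exp (t i - m) - 1 - (t i - m)) := fun i =>
    mul_nonneg (hq i).le (by linarith [Real.add_one_le_exp (t i - m)])
  have hsum : ∑ i, q i * (Real.exp (t i - m) - 1 - (t i - m))
      = (∑ i, q i * Real.exp (t i)) * Real.exp (-m) - 1 := by
    have : ∀ i, q i * (Real.exp (t i - m) - 1 - (t i - m))
        = q i * Real.exp (t i) * Real.exp (-m) - q i - q i * t i + q i * m := fun i => by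
      rw [sub_eq_add_neg (t i) m, Real.exp_add]; ring
    simp only [this, Finset.sum_add_distrib, Finset.sum_sub_distrib, ← Finset.sum_mul, hs, ← hm]
    ring
  constructor
  · rw [Real.le_log_iff_exp_le hpos]
    have h := Finset.sum_nonneg (fun i (_ : i ∈ Finset.univ) => hterm i)
    rw [hsum, Real.exp_neg, ← div_eq_mul_inv, sub_nonneg, le_div_iff₀ (Real.exp_pos _)] at h
    linarith
  · intro h i
    have he : Real.exp m = ∑ i, q i * Real.exp (t i) := by rw [h, Real.exp_log hpos]
    rw [← he, ← Real.exp_add, add_neg_cancel, Real.exp_zero, sub_self] at hsum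
    have h0 := (Finset.sum_eq_zero_iff_of_nonneg (fun i _ => hterm i)).1 hsum i (Finset.mem_univ i)
    by_contra hc
    have := Real.add_one_lt_exp (sub_ne_zero.2 hc)
    rcases mul_eq_zero.1 h0 with h1 | h1
    · exact (hq i).ne' h1
    · linarith

lemma gCE_sum_mul {K : ℕ} (z : Fin K → ℝ) (k : Fin K) (x : Fin K → ℝ) :
    ∑ ℓ, gCE z k ℓ * x ℓ = ∑ ℓ, smax z ℓ * x ℓ - x k := by
  simp [gCE, sub_mul, Finset.sum_sub_distrib]

section
variable {K : ℕ} [NeZero K]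

lemma sumexp_pos (z : Fin K → ℝ) : 0 < ∑ m, Real.exp (z m) :=
  Finset.sum_pos (fun _ _ => Real.exp_pos _) Finset.univ_nonempty

lemma smax_pos (z : Fin K → ℝ) (ℓ : Fin K) : 0 < smax z ℓ :=
  div_pos (Real.exp_pos _) (sumexp_pos z)

lemma smax_sum (z : Fin K → ℝ) : ∑ ℓ, smax z ℓ = 1 := by
  unfold smax
  rw [← Finset.sum_div, div_self (sumexp_pos z).ne']

/-- The cross-entropy loss is convex, in gradient form. -/
lemma LCE_convex (z z' : Fin K → ℝ) (k : Fin K) :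
    LCE z k + ∑ ℓ, gCE z k ℓ * (z' ℓ - z ℓ) ≤ LCE z' k := by
  have h := (gibbs (smax z) (fun ℓ => z' ℓ - z ℓ) (smax_pos z) (smax_sum z)).1
  have e : ∑ i, smax z i * Real.exp (z' i - z i)
      = (∑ i, Real.exp (z' i)) / ∑ i, Real.exp (z i) := by
    rw [Finset.sum_div]
    refine Finset.sum_congr rfl fun i _ => ?_
    rw [smax, Real.exp_sub]
    field_simp
  rw [e, Real.log_div (sumexp_pos _).ne' (sumexp_pos _).ne'] at h
  rw [gCE_sum_mul]
  unfold LCE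
  linarith

lemma LCE_hasDerivAt (z : Fin K → ℝ → ℝ) (z' : Fin K → ℝ) (k : Fin K)
    (h : ∀ ℓ, HasDerivAt (z ℓ) (z' ℓ) 0) :
    HasDerivAt (fun t => LCE (fun ℓ => z ℓ t) k) (∑ ℓ, gCE (fun ℓ => z ℓ 0) k ℓ * z' ℓ) 0 := by
  rw [gCE_sum_mul]
  unfold LCE
  have h1 : HasDerivAt (fun t => ∑ ℓ, Real.exp (z ℓ t)) (∑ ℓ, Real.exp (z ℓ 0) * z' ℓ) 0 :=
    HasDerivAt.fun_sum fun ℓ _ => (h ℓ).exp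
  have h2 := (h1.log (sumexp_pos _).ne').sub (h k)
  have e : ∑ ℓ, smax (fun ℓ => z ℓ 0) ℓ * z' ℓ - z' k
      = (∑ ℓ, Real.exp (z ℓ 0) * z' ℓ) / (∑ ℓ, Real.exp (z ℓ 0)) - z' k := by
    simp only [smax, Finset.sum_div]
    congr 1
    exact Finset.sum_congr rfl fun i _ => by ring
  rw [e]
  exact h2

/-- The tangent plane of the loss at a logit vector whose gaps `z_ℓ - z_k` all equal `x₀`, and
the case of equality. -/
lemma LCE_tangent (z : Fin K → ℝ) (k : Fin K) (x₀ D : ℝ)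
    (hD : D = 1 + ((K : ℝ) - 1) * Real.exp x₀) (hDpos : 0 < D) :
    Real.log D + Real.exp x₀ / D * (∑ ℓ, (z ℓ - z k) - ((K : ℝ) - 1) * x₀) ≤ LCE z k ∧
    (LCE z k = Real.log D + Real.exp x₀ / D * (∑ ℓ, (z ℓ - z k) - ((K : ℝ) - 1) * x₀) →
      ∀ ℓ, ℓ ≠ k → z ℓ - z k = x₀) := by
  let e : Fin K → ℝ := fun ℓ => if ℓ = k then 0 else x₀
  have hek : e k = 0 := by simp [e]
  have hes : ∑ ℓ, Real.exp (e ℓ) = D := by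
    have : ∀ ℓ, Real.exp (e ℓ) = Real.exp x₀ + if ℓ = k then 1 - Real.exp x₀ else 0 := by
      intro ℓ; by_cases h : ℓ = k <;> simp [e, h]
    simp only [this, Finset.sum_add_distrib, Finset.sum_ite_eq', Finset.mem_univ, if_true, hD]
    simp; ring
  have hex : ∑ ℓ, e ℓ = ((K : ℝ) - 1) * x₀ := by
    have : ∀ ℓ, e ℓ = x₀ - if ℓ = k then x₀ else 0 := by
      intro ℓ; by_cases h : ℓ = k <;> simp [e, h]
    simp only [this, Finset.sum_sub_distrib, Finset.sum_ite_eq', Finset.mem_univ, if_true]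
    simp; ring
  have hm : ∑ ℓ, smax e ℓ * (z ℓ - z k - e ℓ)
      = Real.exp x₀ / D * (∑ ℓ, (z ℓ - z k) - ((K : ℝ) - 1) * x₀) := by
    rw [← hex, ← Finset.sum_sub_distrib, Finset.mul_sum]
    refine Finset.sum_congr rfl fun ℓ _ => ?_
    by_cases h : ℓ = k
    · simp [h, hek]
    · simp [smax, hes]; simp [e, h]
  have hl : Real.log (∑ ℓ, smax e ℓ * Real.exp (z ℓ - z k - e ℓ)) = LCE z k - Real.log D := by
    have : ∑ ℓ, smax e ℓ * Real.exp (z ℓ - z k - e ℓ)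
        = (∑ ℓ, Real.exp (z ℓ)) / Real.exp (z k) / D := by
      rw [Finset.sum_div, Finset.sum_div]
      refine Finset.sum_congr rfl fun i _ => ?_
      rw [smax, hes, Real.exp_sub, Real.exp_sub]
      field_simp
    rw [this, Real.log_div (div_pos (sumexp_pos _) (Real.exp_pos _)).ne' hDpos.ne',
      Real.log_div (sumexp_pos _).ne' (Real.exp_pos _).ne', Real.log_exp, LCE]
  obtain ⟨g1, g2⟩ := gibbs (smax e) (fun ℓ => z ℓ - z k - e ℓ) (smax_pos e) (smax_sum e)
  rw [hl, hm] at g1 g2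
  refine ⟨by linarith, fun h ℓ hℓ => ?_⟩
  have g3 := g2 (by linarith)
  have a := g3 ℓ
  have b := g3 k
  rw [← b] at a
  simp only [e, hℓ, if_true, if_false, sub_self] at a
  linarith

end

/-! ### The minimal value and neural collapse -/

section
variable {d K n : ℕ}

/-- Every point of the constraint set at which the risk is at most
`log (1 + (K-1) exp (-Kτ/(K-1)))` attains that value and is a neural collapse configuration. -/
lemma collapse_of_le (hK : 2 ≤ K) (hn : 1 ≤ n) (τ : ℝ) (hτ : 0 < τ)
    (W : Matrix (Fin d) (Fin K) ℝ) (H : Matrix (Fin d) (Fin K × Fin n) ℝ)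
    (hW : W ∈ OB d (Fin K)) (hH : H ∈ OB d (Fin K × Fin n))
    (hle : ceRisk τ W H
      ≤ Real.log (1 + ((K : ℝ) - 1) * Real.exp (-((K : ℝ) * τ) / ((K : ℝ) - 1)))) :
    ceRisk τ W H = Real.log (1 + ((K : ℝ) - 1) * Real.exp (-((K : ℝ) * τ) / ((K : ℝ) - 1))) ∧
    NeuralCollapse W H := by
  have : NeZero K := ⟨by omega⟩
  have hK' : (2 : ℝ) ≤ K := by exact_mod_cast hK
  have hn' : (1 : ℝ) ≤ n := by exact_mod_cast hn
  have hK1 : (K : ℝ) - 1 ≠ 0 := by linarith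
  set x₀ : ℝ := -((K : ℝ) * τ) / ((K : ℝ) - 1) with hx₀
  set D : ℝ := 1 + ((K : ℝ) - 1) * Real.exp x₀ with hD
  have hDpos : 0 < D := by
    have : 0 ≤ ((K : ℝ) - 1) * Real.exp x₀ := mul_nonneg (by linarith) (Real.exp_pos _).le
    linarith
  have hKx : ((K : ℝ) - 1) * x₀ = -(K * τ) := by rw [hx₀]; field_simp
  let z : Fin K × Fin n → Fin K → ℝ := fun j ℓ => τ * ∑ r, W r ℓ * H r j
  let S : Fin d → ℝ := fun r => ∑ ℓ, W r ℓ
  let Q : Fin K × Fin n → ℝ := fun j => ∑ r, (K * W r j.1 - S r - K * H r j) ^ 2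
  have hQ0 : ∀ j, 0 ≤ Q j := fun j => Finset.sum_nonneg fun r _ => sq_nonneg _
  set s2 : ℝ := ∑ r, S r ^ 2 with hs2
  have hs20 : 0 ≤ s2 := Finset.sum_nonneg fun r _ => sq_nonneg _
  set b : ℝ := Real.exp x₀ / D with hb
  have hbpos : 0 < b := div_pos (Real.exp_pos _) hDpos
  have hzs : ∀ j, ∑ ℓ, (z j ℓ - z j j.1) = τ * ∑ r, (S r - K * W r j.1) * H r j := by
    intro j
    have : ∑ ℓ, z j ℓ = τ * ∑ r, S r * H r j := by
      simp only [z, S, ← Finset.mul_sum]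
      rw [Finset.sum_comm]
      simp only [Finset.sum_mul]
    rw [Finset.sum_sub_distrib, this]
    simp only [z, Finset.sum_const, Finset.card_univ, Fintype.card_fin, nsmul_eq_mul, sub_mul,
      Finset.sum_sub_distrib, mul_assoc, ← Finset.mul_sum]
    ring
  -- Completing the square, using the unit norms of `w_k` and `h_j`.
  have hsq : ∀ j, ∑ ℓ, (z j ℓ - z j j.1) - ((K : ℝ) - 1) * x₀
      = τ / (2 * K) * (Q j + (2 * K * ∑ r, W r j.1 * S r - s2)) := by
    intro j
    have e : Q j = K ^ 2 * ∑ r, W r j.1 ^ 2 + s2 + K ^ 2 * ∑ r, H r j ^ 2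
        - 2 * K * ∑ r, W r j.1 * S r + 2 * K * ∑ r, (S r - K * W r j.1) * H r j := by
      simp only [Q, hs2, Finset.mul_sum, ← Finset.sum_add_distrib, ← Finset.sum_sub_distrib]
      exact Finset.sum_congr rfl fun r _ => by ring
    rw [hW j.1, hH j] at e
    rw [hzs, hKx, e]
    field_simp
    ring
  have hlin : ∑ j : Fin K × Fin n, (2 * K * ∑ r, W r j.1 * S r - s2) = n * K * s2 := by
    have : ∑ k, ∑ r, W r k * S r = s2 := by
      rw [Finset.sum_comm, hs2]
      simp only [← Finset.sum_mul, S, sq]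
    rw [Fintype.sum_prod_type]
    simp only [Finset.sum_const, Finset.card_univ, Fintype.card_fin, nsmul_eq_mul,
      ← Finset.mul_sum, Finset.sum_sub_distrib, this]
    ring
  let δ : Fin K × Fin n → ℝ := fun j => LCE (z j) j.1 -
    (Real.log D + b * (∑ ℓ, (z j ℓ - z j j.1) - ((K : ℝ) - 1) * x₀))
  have hδ0 : ∀ j, 0 ≤ δ j := fun j => sub_nonneg.2 (LCE_tangent (z j) j.1 x₀ D hD hDpos).1
  have hKn : (0 : ℝ) < K * n := by positivity
  have hrisk : ceRisk τ W H = 1 / ((K : ℝ) * n) * ∑ j : Fin K × Fin n, LCE (z j) j.1 := by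
    rw [ceRisk, Fintype.sum_prod_type]
  have htot : ∑ j : Fin K × Fin n, LCE (z j) j.1 = K * n * Real.log D + ∑ j, δ j
      + b * τ / (2 * K) * (∑ j, Q j + n * K * s2) := by
    have : ∀ j, LCE (z j) j.1 = Real.log D + δ j
        + b * τ / (2 * K) * (Q j + (2 * K * ∑ r, W r j.1 * S r - s2)) := by
      intro j
      simp only [δ, hsq]
      ring
    rw [← hlin, ← Finset.sum_add_distrib, Finset.mul_sum]
    simp only [this, Finset.sum_add_distrib]
    simp
  have hle' : ∑ j : Fin K × Fin n, LCE (z j) j.1 ≤ K * n * Real.log D := by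
    rw [hrisk, one_div, inv_mul_le_iff₀ hKn] at hle
    exact hle
  have hδs : 0 ≤ ∑ j, δ j := Finset.sum_nonneg fun j _ => hδ0 j
  have hQs : 0 ≤ ∑ j, Q j := Finset.sum_nonneg fun j _ => hQ0 j
  have hcoef : 0 < b * τ / (2 * K) := by positivity
  have hns : 0 ≤ n * K * s2 := by positivity
  have hlast : 0 ≤ b * τ / (2 * K) * (∑ j, Q j + n * K * s2) :=
    mul_nonneg hcoef.le (by linarith)
  have e1 : ∑ j, δ j = 0 := by linarith
  have e2 : ∑ j, Q j + n * K * s2 = 0 := by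
    have : b * τ / (2 * K) * (∑ j, Q j + n * K * s2) = 0 := by linarith
    exact (mul_eq_zero.1 this).resolve_left hcoef.ne'
  have e3 : ∑ j, Q j = 0 := by linarith
  have e4 : s2 = 0 := by
    have : (n * K : ℝ) * s2 = 0 := by linarith
    exact (mul_eq_zero.1 this).resolve_left (by positivity)
  have hS : ∀ r, S r = 0 := fun r => by
    have := (Finset.sum_eq_zero_iff_of_nonneg (fun r _ => sq_nonneg (S r))).1 e4 r
      (Finset.mem_univ r)
    exact pow_eq_zero_iff (two_ne_zero) |>.1 this
  have hHW : ∀ r j, H r j = W r j.1 := fun r j => by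
    have h1 := (Finset.sum_eq_zero_iff_of_nonneg (fun j _ => hQ0 j)).1 e3 j (Finset.mem_univ j)
    have h2 := (Finset.sum_eq_zero_iff_of_nonneg
      (fun r _ => sq_nonneg (K * W r j.1 - S r - K * H r j))).1 h1 r (Finset.mem_univ r)
    have h3 := pow_eq_zero_iff (two_ne_zero) |>.1 h2
    rw [hS, sub_zero, ← mul_sub] at h3
    have := (mul_eq_zero.1 h3).resolve_left (by positivity)
    linarith
  have hz : ∀ j ℓ, ℓ ≠ j.1 → z j ℓ - z j j.1 = x₀ := fun j => by
    have h1 := (Finset.sum_eq_zero_iff_of_nonneg (fun j _ => hδ0 j)).1 e1 j (Finset.mem_univ j)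
    exact (LCE_tangent (z j) j.1 x₀ D hD hDpos).2 (by simp only [δ] at h1; linarith)
  have hbar_eq : ∀ r k, hbar H r k = W r k := fun r k => by
    simp only [hbar, hHW, Finset.sum_const, Finset.card_univ, Fintype.card_fin, nsmul_eq_mul]
    field_simp
  have hbar_eq' : hbar H = W := by ext r k; exact hbar_eq r k
  refine ⟨?_, ?_, ⟨?_, ?_⟩, ?_⟩
  · rw [hrisk, htot, e1, e2]
    field_simp
    ring
  · intro k i r; rw [hbar_eq, hHW]
  · rw [hbar_eq']; exact hW
  · rw [hbar_eq']
    ext ℓ k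
    simp only [Matrix.mul_apply, Matrix.transpose_apply, Matrix.smul_apply, Matrix.sub_apply,
      Matrix.of_apply, smul_eq_mul, Matrix.one_apply]
    by_cases h : ℓ = k
    · subst h
      have := hW ℓ
      simp only [sq] at this
      rw [this]; simp only [if_true]
      field_simp
    · have h1 := hz (k, ⟨0, hn⟩) ℓ h
      simp only [z, hHW, ← sq] at h1
      rw [hW k] at h1
      simp only [h, if_false]
      have : τ * ∑ r, W r ℓ * W r k = τ * (((K : ℝ) - 1)⁻¹ * (K * 0 - 1)) := by
        rw [hx₀] at h1
        field_simp at h1 ⊢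
        linarith
      exact mul_left_cancel₀ hτ.ne' this
  · intro r k; rw [hbar_eq]

/-- A simplex equiangular tight frame exists in `ℝ^d`: normalise the centred standard basis
vectors `e_k - K⁻¹ ∑ e_ℓ`. -/
lemma exists_simplex (hK : 2 ≤ K) (hdK : K < d) :
    ∃ W : Matrix (Fin d) (Fin K) ℝ, ∀ ℓ k, ∑ r, W r ℓ * W r k
      = if ℓ = k then 1 else -((K : ℝ) - 1)⁻¹ := by
  have hK' : (2 : ℝ) ≤ K := by exact_mod_cast hK
  have hK1 : (K : ℝ) - 1 ≠ 0 := by linarith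
  have hK0 : (K : ℝ) ≠ 0 := by linarith
  let c : ℝ := √((K : ℝ) / (K - 1))
  have hc : c * c = (K : ℝ) / (K - 1) := Real.mul_self_sqrt (div_nonneg (by linarith) (by linarith))
  let V : Fin K → Fin K → ℝ := fun r k => c * ((if r = k then 1 else 0) - (K : ℝ)⁻¹)
  obtain ⟨m, rfl⟩ := Nat.exists_eq_add_of_lt hdK
  rw [Nat.add_assoc]
  refine ⟨fun r k => Fin.append (fun r => V r k) (fun _ : Fin (m + 1) => 0) r, fun ℓ k => ?_⟩
  rw [Fin.sum_univ_add]
  simp only [Fin.append_left, Fin.append_right, mul_zero, Finset.sum_const_zero, add_zero]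
  have : ∀ r, V r ℓ * V r k = (K : ℝ) / (K - 1) * ((if r = ℓ then (if r = k then 1 else 0) else 0)
      - (K : ℝ)⁻¹ * (if r = ℓ then 1 else 0) - (K : ℝ)⁻¹ * (if r = k then 1 else 0)
        + (K : ℝ)⁻¹ ^ 2) := by
    intro r
    rw [← hc]
    simp only [V]
    split_ifs <;> ring
  simp only [this, ← Finset.mul_sum, Finset.sum_add_distrib, Finset.sum_sub_distrib,
    Finset.sum_ite_eq', Finset.mem_univ, if_true]
  simp only [Finset.sum_const, Finset.card_univ, Fintype.card_fin, nsmul_eq_mul]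
  split_ifs <;> field_simp <;> ring

lemma exists_risk_le (hK : 2 ≤ K) (hdK : K < d) (hn : 1 ≤ n) (τ : ℝ) :
    ∃ (W : Matrix (Fin d) (Fin K) ℝ) (H : Matrix (Fin d) (Fin K × Fin n) ℝ),
      W ∈ OB d (Fin K) ∧ H ∈ OB d (Fin K × Fin n) ∧ ceRisk τ W H
        = Real.log (1 + ((K : ℝ) - 1) * Real.exp (-((K : ℝ) * τ) / ((K : ℝ) - 1))) := by
  obtain ⟨W, hW⟩ := exists_simplex hK hdK
  have hK' : (2 : ℝ) ≤ K := by exact_mod_cast hK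
  have hn' : (1 : ℝ) ≤ n := by exact_mod_cast hn
  have hK1 : (K : ℝ) - 1 ≠ 0 := by linarith
  have hn0 : (n : ℝ) ≠ 0 := by linarith
  have hK0 : (K : ℝ) ≠ 0 := by linarith
  refine ⟨W, fun r j => W r j.1, ?_, ?_, ?_⟩
  · intro k; simpa [sq] using hW k k
  · intro j; simpa [sq] using hW j.1 j.1
  · set x₀ : ℝ := -((K : ℝ) * τ) / ((K : ℝ) - 1) with hx₀
    have key : ∀ k, LCE (fun ℓ => τ * ∑ r, W r ℓ * W r k) k
        = Real.log (1 + ((K : ℝ) - 1) * Real.exp x₀) := by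
      intro k
      have h1 : ∀ ℓ, Real.exp (τ * ∑ r, W r ℓ * W r k)
          = Real.exp τ * (Real.exp x₀ + if ℓ = k then 1 - Real.exp x₀ else 0) := by
        intro ℓ
        rw [hW]
        by_cases h : ℓ = k
        · simp [h]
        · simp only [h, if_false, add_zero, ← Real.exp_add]
          congr 1
          rw [hx₀]; field_simp; ring
      have h2 : ∑ ℓ, Real.exp (τ * ∑ r, W r ℓ * W r k)
          = Real.exp τ * (1 + ((K : ℝ) - 1) * Real.exp x₀) := by
        simp only [h1, ← Finset.mul_sum, Finset.sum_add_distrib, Finset.sum_ite_eq',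
          Finset.mem_univ, if_true]
        simp only [Finset.sum_const, Finset.card_univ, Fintype.card_fin, nsmul_eq_mul]
        ring
      have h3 : 0 ≤ ((K : ℝ) - 1) * Real.exp x₀ := mul_nonneg (by linarith) (Real.exp_pos _).le
      rw [LCE, h2, Real.log_mul (Real.exp_pos _).ne' (by linarith), Real.log_exp, hW]
      simp
    simp only [ceRisk, key, Finset.sum_const, Finset.card_univ, Fintype.card_fin, nsmul_eq_mul]
    field_simp

end

/-! ### Curves in the product of oblique manifolds -/

section
variable {d K n : ℕ}

lemma nrm_of_mem {ι : Type} [Fintype ι] {X : Matrix (Fin d) ι ℝ} (hX : X ∈ OB d ι) :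
    nrm X = X := by
  ext r j
  simp [nrm, hX j]

lemma nrm_mem {ι : Type} [Fintype ι] {X : Matrix (Fin d) ι ℝ} (hX : ∀ j, ∑ i, X i j ^ 2 ≠ 0) :
    nrm X ∈ OB d ι := by
  intro j
  have h : 0 ≤ ∑ i, X i j ^ 2 := Finset.sum_nonneg fun i _ => sq_nonneg _
  simp only [nrm, div_pow, Real.sq_sqrt h, ← Finset.sum_div]
  exact div_self (hX j)

/-- Normalising the columns of a perturbation of a point of the oblique manifold gives a curve in
the manifold that tends to that point. -/
lemma nrm_tendsto {ι : Type} [Fintype ι] {X : Matrix (Fin d) ι ℝ} (hX : X ∈ OB d ι)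
    (A : Matrix (Fin d) ι ℝ) {c : ℝ → ℝ} (hc : Tendsto c (𝓝[>] 0) (𝓝 0)) :
    Tendsto (fun t => nrm (X + c t • A)) (𝓝[>] 0) (𝓝[OB d ι] X) := by
  have hX' : Tendsto (fun t => X + c t • A) (𝓝[>] 0) (𝓝 X) := by
    have : Tendsto (fun t => X + c t • A) (𝓝[>] 0) (𝓝 (X + (0 : ℝ) • A)) :=
      tendsto_const_nhds.add (hc.smul_const A)
    simpa using this
  have hcoord : ∀ r j, Tendsto (fun t => (X + c t • A) r j) (𝓝[>] 0) (𝓝 (X r j)) := fun r j =>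
    tendsto_pi_nhds.1 (tendsto_pi_nhds.1 hX' r) j
  have hnorm : ∀ j, Tendsto (fun t => ∑ i, (X + c t • A) i j ^ 2) (𝓝[>] 0) (𝓝 1) := fun j => by
    rw [← hX j]
    exact tendsto_finsetSum _ fun i _ => (hcoord i j).pow 2
  refine tendsto_nhdsWithin_iff.2 ⟨?_, ?_⟩
  · refine tendsto_pi_nhds.2 fun r => tendsto_pi_nhds.2 fun j => ?_
    have := (hcoord r j).div ((Real.continuous_sqrt.tendsto 1).comp (hnorm j)) (by simp)
    rw [Real.sqrt_one, div_one] at this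
    exact this
  · have : ∀ᶠ t in 𝓝[>] (0 : ℝ), ∀ j, ∑ i, (X + c t • A) i j ^ 2 ≠ 0 :=
      eventually_all.2 fun j => (hnorm j).eventually_ne one_ne_zero
    exact this.mono fun t ht => nrm_mem ht

/-- Right-sided first derivative test. -/
lemma deriv_nonneg_of_right_min {φ : ℝ → ℝ} {φ' : ℝ} (h : HasDerivAt φ φ' 0)
    (hmin : ∀ᶠ t in 𝓝[>] (0 : ℝ), φ 0 ≤ φ t) : 0 ≤ φ' := by
  have ht : Tendsto (slope φ 0) (𝓝[>] 0) (𝓝 φ') :=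
    (hasDerivAt_iff_tendsto_slope.1 h).mono_left
      (nhdsWithin_mono _ fun x (hx : 0 < x) => hx.ne')
  refine ge_of_tendsto ht ?_
  filter_upwards [hmin, self_mem_nhdsWithin] with t h1 h2
  rw [slope_def_field]
  exact div_nonneg (sub_nonneg.2 h1) (by simpa using le_of_lt h2)

/-- `(W, H)` is a local minimizer of the risk on the product of oblique manifolds. -/
def LocMin (τ : ℝ) (W : Matrix (Fin d) (Fin K) ℝ) (H : Matrix (Fin d) (Fin K × Fin n) ℝ) : Prop :=
  ∀ᶠ p in 𝓝[OB d (Fin K) ×ˢ OB d (Fin K × Fin n)] (W, H), ceRisk τ W H ≤ ceRisk τ p.1 p.2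

/-- The logits `τ ⟨w_ℓ, h_j⟩` of the sample `j`. -/
noncomputable def logit (τ : ℝ) (W : Matrix (Fin d) (Fin K) ℝ)
    (H : Matrix (Fin d) (Fin K × Fin n) ℝ) (j : Fin K × Fin n) (ℓ : Fin K) : ℝ :=
  τ * ∑ r, W r ℓ * H r j

/-- The (unnormalised) gradient of the risk with respect to the logit matrix. -/
noncomputable def grad (τ : ℝ) (W : Matrix (Fin d) (Fin K) ℝ)
    (H : Matrix (Fin d) (Fin K × Fin n) ℝ) (j : Fin K × Fin n) (ℓ : Fin K) : ℝ :=
  gCE (logit τ W H j) j.1 ℓ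

lemma ceRisk_eq (τ : ℝ) (W : Matrix (Fin d) (Fin K) ℝ) (H : Matrix (Fin d) (Fin K × Fin n) ℝ) :
    ceRisk τ W H = 1 / ((K : ℝ) * n) * ∑ j : Fin K × Fin n, LCE (logit τ W H j) j.1 := by
  rw [ceRisk, Fintype.sum_prod_type]
  rfl

/-- First-order condition along the curve obtained by normalising `(W + c(t) A, H + c(t) B)`,
for a reparametrisation `c` along which the inner products of columns are affine in `t` with slopes
`y` and the squared norms of the columns are `1 + p t + O(t²)`. With `c(t) = √t` this expresses a
second-order condition. -/
lemma variation [NeZero K] (hn : 1 ≤ n) {τ : ℝ} (hτ : 0 < τ) {W : Matrix (Fin d) (Fin K) ℝ}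
    {H : Matrix (Fin d) (Fin K × Fin n) ℝ} (hW : W ∈ OB d (Fin K)) (hH : H ∈ OB d (Fin K × Fin n))
    (hloc : LocMin τ W H)
    (A : Matrix (Fin d) (Fin K) ℝ) (B : Matrix (Fin d) (Fin K × Fin n) ℝ)
    {c : ℝ → ℝ} (hc : Tendsto c (𝓝[>] 0) (𝓝 0))
    (y : Fin K × Fin n → Fin K → ℝ) (p q : Fin K → ℝ) (p' q' : Fin K × Fin n → ℝ)
    (hy : ∀ t > 0, ∀ j ℓ, ∑ r, (W r ℓ + c t * A r ℓ) * (H r j + c t * B r j)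
      = ∑ r, W r ℓ * H r j + t * y j ℓ)
    (hp : ∀ t > 0, ∀ ℓ, ∑ r, (W r ℓ + c t * A r ℓ) ^ 2 = 1 + t * p ℓ + t ^ 2 * q ℓ)
    (hp' : ∀ t > 0, ∀ j, ∑ r, (H r j + c t * B r j) ^ 2 = 1 + t * p' j + t ^ 2 * q' j) :
    0 ≤ ∑ j, ∑ ℓ, grad τ W H j ℓ *
      (y j ℓ - (∑ r, W r ℓ * H r j) * ((p ℓ + p' j) / 2)) := by
  let M : Fin K × Fin n → Fin K → ℝ → ℝ := fun j ℓ t => τ * (∑ r, W r ℓ * H r j + t * y j ℓ) /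
    (√(1 + t * p ℓ + t ^ 2 * q ℓ) * √(1 + t * p' j + t ^ 2 * q' j))
  have hsqrt : ∀ a b : ℝ, HasDerivAt (fun t : ℝ => √(1 + t * a + t ^ 2 * b)) (a / 2) 0 := by
    intro a b
    have h1 : HasDerivAt (fun t : ℝ => 1 + t * a + t ^ 2 * b) a 0 := by
      have := (((hasDerivAt_id (0 : ℝ)).mul_const a).const_add 1).fun_add
        (((hasDerivAt_id (0 : ℝ)).fun_pow 2).mul_const b)
      simpa using this
    simpa using h1.sqrt (by simp)
  have hM : ∀ j ℓ, HasDerivAt (M j ℓ)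
      (τ * (y j ℓ - (∑ r, W r ℓ * H r j) * ((p ℓ + p' j) / 2))) 0 := by
    intro j ℓ
    have h1 : HasDerivAt (fun t : ℝ => τ * (∑ r, W r ℓ * H r j + t * y j ℓ)) (τ * y j ℓ) 0 := by
      have := (((hasDerivAt_id (0 : ℝ)).mul_const (y j ℓ)).const_add
        (∑ r, W r ℓ * H r j)).const_mul τ
      simpa using this
    have h2 := h1.div ((hsqrt (p ℓ) (q ℓ)).mul (hsqrt (p' j) (q' j))) (by simp)
    refine h2.congr_deriv ?_
    simp
    ring
  have hM0 : ∀ j, (fun ℓ => M j ℓ 0) = logit τ W H j := by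
    intro j; ext ℓ; simp [M, logit]
  have hφ : HasDerivAt (fun t => ∑ j, LCE (fun ℓ => M j ℓ t) j.1)
      (∑ j, ∑ ℓ, grad τ W H j ℓ * (τ * (y j ℓ - (∑ r, W r ℓ * H r j) * ((p ℓ + p' j) / 2)))) 0 := by
    refine HasDerivAt.fun_sum fun j _ => ?_
    have := LCE_hasDerivAt (M j) _ j.1 (hM j)
    rw [hM0] at this
    exact this
  have hKn : (0 : ℝ) < 1 / (K * n) := by
    have := Nat.pos_of_ne_zero (NeZero.ne K)
    positivity
  have hpath : Tendsto (fun t => (nrm (W + c t • A), nrm (H + c t • B))) (𝓝[>] 0)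
      (𝓝[OB d (Fin K) ×ˢ OB d (Fin K × Fin n)] (W, H)) := by
    rw [nhdsWithin_prod_eq]
    exact (nrm_tendsto hW A hc).prodMk (nrm_tendsto hH B hc)
  have hmin := deriv_nonneg_of_right_min hφ (by
    filter_upwards [hpath.eventually hloc, self_mem_nhdsWithin] with t h1 h2
    simp only [ceRisk_eq] at h1
    have h3 := le_of_mul_le_mul_left h1 hKn
    simp only [hM0]
    refine h3.trans_eq (Finset.sum_congr rfl fun j _ => ?_)
    congr 1
    ext ℓ
    simp only [logit, nrm, M, Matrix.add_apply, Matrix.smul_apply, smul_eq_mul,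
      hp t h2, hp' t h2, ← hy t h2, div_mul_div_comm]
    rw [← Finset.sum_div, mul_div_assoc])
  have : ∑ j, ∑ ℓ, grad τ W H j ℓ * (τ * (y j ℓ - (∑ r, W r ℓ * H r j) * ((p ℓ + p' j) / 2)))
      = τ * ∑ j, ∑ ℓ, grad τ W H j ℓ * (y j ℓ - (∑ r, W r ℓ * H r j) * ((p ℓ + p' j) / 2)) := by
    simp only [Finset.mul_sum]
    exact Finset.sum_congr rfl fun j _ => Finset.sum_congr rfl fun ℓ _ => by ring
  rw [this] at hmin
  exact nonneg_of_mul_nonneg_right hmin hτ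

end

/-! ### Local minimizers are global -/

lemma exists_orth {d K : ℕ} (hdK : K < d) (W : Matrix (Fin d) (Fin K) ℝ) :
    ∃ a : Fin d → ℝ, a ≠ 0 ∧ ∀ ℓ, ∑ r, a r * W r ℓ = 0 := by
  have h : LinearMap.ker (Matrix.mulVecLin Wᵀ) ≠ ⊥ :=
    LinearMap.ker_ne_bot_of_finrank_lt (by simpa using hdK)
  obtain ⟨a, ha, ha0⟩ := (Submodule.ne_bot_iff _).1 h
  refine ⟨a, ha0, fun ℓ => ?_⟩
  have := congrFun (LinearMap.mem_ker.1 ha) ℓ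
  simpa only [mul_comm] using (show ∑ r, W r ℓ * a r = 0 from this)

section
variable {d K n : ℕ} [NeZero K] {τ : ℝ} {W : Matrix (Fin d) (Fin K) ℝ}
  {H : Matrix (Fin d) (Fin K × Fin n) ℝ}

/-- Stationarity in the single column `h_j`. -/
lemma stationary_H (hn : 1 ≤ n) (hτ : 0 < τ) (hW : W ∈ OB d (Fin K))
    (hH : H ∈ OB d (Fin K × Fin n)) (hloc : LocMin τ W H) (j₀ : Fin K × Fin n) (b : Fin d → ℝ) :
    ∑ ℓ, grad τ W H j₀ ℓ *
      (∑ r, W r ℓ * b r - (∑ r, W r ℓ * H r j₀) * ∑ r, H r j₀ * b r) = 0 := by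
  have key : ∀ b : Fin d → ℝ, 0 ≤ ∑ ℓ, grad τ W H j₀ ℓ *
      (∑ r, W r ℓ * b r - (∑ r, W r ℓ * H r j₀) * ∑ r, H r j₀ * b r) := by
    intro b
    let v : Fin K × Fin n → ℝ := fun j => if j = j₀ then 1 else 0
    have := variation hn hτ hW hH hloc 0 (fun r j => v j * b r) (c := id)
      (tendsto_nhdsWithin_of_tendsto_nhds tendsto_id)
      (fun j ℓ => v j * ∑ r, W r ℓ * b r) 0 0
      (fun j => v j * (2 * ∑ r, H r j * b r)) (fun j => v j ^ 2 * ∑ r, b r ^ 2)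
      (fun t _ j ℓ => by
        simp only [Matrix.zero_apply, mul_zero, add_zero, id, Finset.mul_sum,
          ← Finset.sum_add_distrib]
        exact Finset.sum_congr rfl fun r _ => by ring)
      (fun t _ ℓ => by simpa using hW ℓ)
      (fun t _ j => by
        rw [← hH j]
        simp only [id, Finset.mul_sum, ← Finset.sum_add_distrib]
        exact Finset.sum_congr rfl fun r _ => by ring)
    refine this.trans_eq ?_
    rw [Finset.sum_eq_single j₀]
    · refine Finset.sum_congr rfl fun ℓ _ => ?_
      simp only [v, if_true, Pi.zero_apply]
      ring
    · intro j _ hj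
      simp [v, hj]
    · simp
  refine le_antisymm ?_ (key b)
  have h := key (-b)
  have e : ∑ ℓ, grad τ W H j₀ ℓ *
      (∑ r, W r ℓ * (-b) r - (∑ r, W r ℓ * H r j₀) * ∑ r, H r j₀ * (-b) r)
      = -∑ ℓ, grad τ W H j₀ ℓ *
      (∑ r, W r ℓ * b r - (∑ r, W r ℓ * H r j₀) * ∑ r, H r j₀ * b r) := by
    rw [← Finset.sum_neg_distrib]
    refine Finset.sum_congr rfl fun ℓ _ => ?_
    simp only [Pi.neg_apply, mul_neg, Finset.sum_neg_distrib]
    ring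
  linarith

/-- Stationarity in the single column `w_ℓ`, in directions orthogonal to `w_ℓ`. -/
lemma stationary_W (hn : 1 ≤ n) (hτ : 0 < τ) (hW : W ∈ OB d (Fin K))
    (hH : H ∈ OB d (Fin K × Fin n)) (hloc : LocMin τ W H) (ℓ₀ : Fin K) (a : Fin d → ℝ)
    (ha : ∑ r, W r ℓ₀ * a r = 0) :
    ∑ j, grad τ W H j ℓ₀ * ∑ r, a r * H r j = 0 := by
  have key : ∀ a : Fin d → ℝ, ∑ r, W r ℓ₀ * a r = 0 →
      0 ≤ ∑ j, grad τ W H j ℓ₀ * ∑ r, a r * H r j := by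
    intro a ha
    let v : Fin K → ℝ := fun ℓ => if ℓ = ℓ₀ then 1 else 0
    have := variation hn hτ hW hH hloc (fun r ℓ => v ℓ * a r) 0 (c := id)
      (tendsto_nhdsWithin_of_tendsto_nhds tendsto_id)
      (fun j ℓ => v ℓ * ∑ r, a r * H r j)
      (fun ℓ => v ℓ * (2 * ∑ r, W r ℓ * a r)) (fun ℓ => v ℓ ^ 2 * ∑ r, a r ^ 2) 0 0
      (fun t _ j ℓ => by
        simp only [Matrix.zero_apply, mul_zero, add_zero, id, Finset.mul_sum,
          ← Finset.sum_add_distrib]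
        exact Finset.sum_congr rfl fun r _ => by ring)
      (fun t _ ℓ => by
        rw [← hW ℓ]
        simp only [id, Finset.mul_sum, ← Finset.sum_add_distrib]
        exact Finset.sum_congr rfl fun r _ => by ring)
      (fun t _ j => by simpa using hH j)
    refine this.trans_eq (Finset.sum_congr rfl fun j _ => ?_)
    rw [Finset.sum_eq_single ℓ₀]
    · simp [v, ha]
    · intro ℓ _ hℓ
      simp [v, hℓ]
    · simp
  refine le_antisymm ?_ (key a ha)
  have h := key (-a) (by simp [ha])
  simp only [Pi.neg_apply, neg_mul, Finset.sum_neg_distrib, mul_neg] at h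
  linarith

/-- The second-order condition in a direction `a` orthogonal to all columns of `W` and `H`: a
positive semidefinite quadratic form in `(u, v)`. -/
lemma second_order (hn : 1 ≤ n) (hτ : 0 < τ) (hW : W ∈ OB d (Fin K))
    (hH : H ∈ OB d (Fin K × Fin n)) (hloc : LocMin τ W H) (a : Fin d → ℝ) (ha : a ≠ 0)
    (haW : ∀ ℓ, ∑ r, a r * W r ℓ = 0) (haH : ∀ j, ∑ r, a r * H r j = 0)
    (u : Fin K → ℝ) (v : Fin K × Fin n → ℝ) :
    0 ≤ ∑ j, ∑ ℓ, grad τ W H j ℓ *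
      (u ℓ * v j - (∑ r, W r ℓ * H r j) * ((u ℓ ^ 2 + v j ^ 2) / 2)) := by
  set s : ℝ := ∑ r, a r ^ 2 with hs
  have hspos : 0 < s := by
    obtain ⟨r, hr⟩ := Function.ne_iff.1 ha
    exact Finset.sum_pos' (fun r _ => sq_nonneg _) ⟨r, Finset.mem_univ r, sq_pos_of_ne_zero hr⟩
  have hexp : ∀ (x y : Fin d → ℝ) (c α β : ℝ), ∑ r, a r * x r = 0 → ∑ r, a r * y r = 0 →
      ∑ r, (x r + c * (a r * α)) * (y r + c * (a r * β))
        = ∑ r, x r * y r + c ^ 2 * (α * β * s) := by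
    intro x y c α β hx hy
    have : ∀ r, (x r + c * (a r * α)) * (y r + c * (a r * β))
        = x r * y r + c * β * (a r * x r) + c * α * (a r * y r) + c ^ 2 * (α * β) * a r ^ 2 :=
      fun r => by ring
    simp only [this, Finset.sum_add_distrib, ← Finset.mul_sum, hx, hy, ← hs]
    ring
  have := variation hn hτ hW hH hloc (fun r ℓ => a r * u ℓ) (fun r j => a r * v j) (c := Real.sqrt)
    (tendsto_nhdsWithin_of_tendsto_nhds (by
      simpa using Real.continuous_sqrt.tendsto 0))
    (fun j ℓ => u ℓ * v j * s) (fun ℓ => u ℓ * u ℓ * s) 0 (fun j => v j * v j * s) 0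
    (fun t ht j ℓ => by rw [hexp _ _ _ _ _ (haW ℓ) (haH j), Real.sq_sqrt (le_of_lt ht)])
    (fun t ht ℓ => by
      simp only [sq (_ + _)]
      rw [hexp _ _ _ _ _ (haW ℓ) (haW ℓ), Real.sq_sqrt (le_of_lt ht)]
      simp only [← sq, hW ℓ]; simp)
    (fun t ht j => by
      simp only [sq (_ + _)]
      rw [hexp _ _ _ _ _ (haH j) (haH j), Real.sq_sqrt (le_of_lt ht)]
      simp only [← sq, hH j]; simp)
  refine nonneg_of_mul_nonneg_right (this.trans_eq ?_) hspos
  simp only [Finset.mul_sum]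
  exact Finset.sum_congr rfl fun j _ => Finset.sum_congr rfl fun ℓ _ => by ring

/-- With all columns of `W` equal, the risk does not depend on `H`. -/
lemma ceRisk_of_const {w : Fin d → ℝ} (hw : ∀ r ℓ, W r ℓ = w r) (hn : 1 ≤ n) :
    ceRisk τ W H = Real.log K := by
  have hK : (K : ℝ) ≠ 0 := by exact_mod_cast NeZero.ne K
  have hn0 : (n : ℝ) ≠ 0 := by positivity
  have : ∀ j, LCE (logit τ W H j) j.1 = Real.log K := by
    intro j
    simp only [LCE, logit, hw, Finset.sum_const, Finset.card_univ, Fintype.card_fin, nsmul_eq_mul]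
    rw [Real.log_mul hK (Real.exp_pos _).ne', Real.log_exp]
    ring
  simp only [ceRisk_eq, this, Finset.sum_const, Finset.card_univ, Fintype.card_prod,
    Fintype.card_fin, nsmul_eq_mul, Nat.cast_mul]
  field_simp

/-- A local minimizer with all columns of `W` equal has no `h_j` outside the hyperplane orthogonal
to a vector `a ⊥ w`: the risk is constant in `H`, so every nearby `(W, H')` would be a local
minimizer too, and stationarity in `W` then forces `⟨a, h'_{j₀}⟩ = ⟨a, h_{j₀}⟩` when only the column
`j₀` moves, which is impossible if the right-hand side is nonzero. -/
lemma orth_of_const (hK : 2 ≤ K) (hn : 1 ≤ n) (hτ : 0 < τ) (hW : W ∈ OB d (Fin K))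
    (hH : H ∈ OB d (Fin K × Fin n)) (hloc : LocMin τ W H) {w : Fin d → ℝ}
    (hw : ∀ r ℓ, W r ℓ = w r) (a : Fin d → ℝ) (ha : ∑ r, w r * a r = 0) (j₀ : Fin K × Fin n) :
    ∑ r, a r * H r j₀ = 0 := by
  by_contra hc
  have hw1 : ∑ r, w r ^ 2 = 1 := by simpa [hw] using hW j₀.1
  have hgrad : ∀ (H' : Matrix (Fin d) (Fin K × Fin n) ℝ) (j : Fin K × Fin n) (ℓ : Fin K),
      grad τ W H' j ℓ = (K : ℝ)⁻¹ - if ℓ = j.1 then 1 else 0 := by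
    intro H' j ℓ
    simp only [grad, gCE, smax, logit, hw, Finset.sum_const, Finset.card_univ, Fintype.card_fin,
      nsmul_eq_mul]
    congr 1
    exact div_mul_cancel_right₀ (ne_of_gt (Real.exp_pos _)) _
  -- The sign of `w` is chosen so that moving `h_{j₀}` along `b` increases its norm.
  obtain ⟨b, hb1, hba, hbh⟩ : ∃ b : Fin d → ℝ, ∑ r, b r ^ 2 = 1 ∧ ∑ r, a r * b r = 0 ∧
      0 ≤ ∑ r, H r j₀ * b r := by
    rcases le_total 0 (∑ r, H r j₀ * w r) with h | h
    · exact ⟨w, hw1, by simpa only [mul_comm] using ha, h⟩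
    · refine ⟨-w, by simpa using hw1, ?_, by simpa using h⟩
      simpa [mul_comm] using ha
  obtain ⟨B, hB⟩ : ∃ B : Matrix (Fin d) (Fin K × Fin n) ℝ,
      ∀ r j, B r j = (if j = j₀ then 1 else 0) * b r := ⟨fun r j => _, fun r j => rfl⟩
  have hid : Tendsto (id : ℝ → ℝ) (𝓝[>] 0) (𝓝 0) :=
    tendsto_nhdsWithin_of_tendsto_nhds tendsto_id
  have hpath : Tendsto (fun t : ℝ => (W, nrm (H + id t • B))) (𝓝[>] 0)
      (𝓝[OB d (Fin K) ×ˢ OB d (Fin K × Fin n)] (W, H)) := by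
    rw [nhdsWithin_prod_eq]
    exact (tendsto_nhdsWithin_iff.2 ⟨tendsto_const_nhds, .of_forall fun _ => hW⟩).prodMk
      (nrm_tendsto hH B hid)
  have hev : ∀ᶠ p in 𝓝[OB d (Fin K) ×ˢ OB d (Fin K × Fin n)] (W, H),
      ∀ᶠ p' in 𝓝[OB d (Fin K) ×ˢ OB d (Fin K × Fin n)] p,
        ceRisk τ W H ≤ ceRisk τ p'.1 p'.2 := eventually_eventually_nhdsWithin.2 hloc
  obtain ⟨t, ⟨ht1, ht2⟩, ht⟩ := ((hpath.eventually hev).and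
    ((nrm_tendsto hH B hid).eventually self_mem_nhdsWithin)).and self_mem_nhdsWithin |>.exists
  set H' := nrm (H + id t • B) with hH'
  have ht0 : 0 < t := ht
  have hloc' : LocMin τ W H' := by
    unfold LocMin
    rw [ceRisk_of_const hw hn, ← ceRisk_of_const (H := H) hw hn (τ := τ)]
    exact ht1
  have ha' : ∀ ℓ, ∑ r, W r ℓ * a r = 0 := fun ℓ => by simpa only [hw] using ha
  have s1 := stationary_W hn hτ hW hH hloc j₀.1 a (ha' _)
  have s2 := stationary_W hn hτ hW ht2 hloc' j₀.1 a (ha' _)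
  have hne : ∀ j, j ≠ j₀ → ∀ r, H' r j = H r j := by
    intro j hj r
    have := hH j
    simp [hH', nrm, hB, hj, this]
  have hdiff : ∑ j, grad τ W H j j₀.1 * (∑ r, a r * H' r j - ∑ r, a r * H r j) = 0 := by
    simp only [mul_sub, Finset.sum_sub_distrib]
    rw [s1, sub_zero, ← s2]
    exact Finset.sum_congr rfl fun j _ => by rw [hgrad, hgrad]
  rw [Finset.sum_eq_single j₀ (fun j _ hj => by simp [hne j hj]) (by simp), hgrad] at hdiff
  have hK1 : (K : ℝ)⁻¹ - 1 ≠ 0 := by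
    have : (K : ℝ)⁻¹ < 1 := inv_lt_one_of_one_lt₀ (by exact_mod_cast hK)
    linarith
  simp only [if_true] at hdiff
  have heq := (mul_eq_zero.1 hdiff).resolve_left hK1
  have hcol : ∀ r, H' r j₀ = (H r j₀ + t * b r) / √(∑ i, (H i j₀ + t * b i) ^ 2) := by
    intro r; simp [hH', nrm, hB]
  have hQ : ∑ i, (H i j₀ + t * b i) ^ 2 = 1 + (2 * t * ∑ i, H i j₀ * b i + t ^ 2) := by
    have : ∀ i, (H i j₀ + t * b i) ^ 2 = H i j₀ ^ 2 + 2 * t * (H i j₀ * b i) + t ^ 2 * b i ^ 2 :=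
      fun i => by ring
    simp only [this, Finset.sum_add_distrib, ← Finset.mul_sum, hb1, hH j₀]
    ring
  have hQ1 : 1 < √(∑ i, (H i j₀ + t * b i) ^ 2) := by
    rw [Real.lt_sqrt zero_le_one, hQ]
    have : 0 ≤ 2 * t * ∑ i, H i j₀ * b i := by positivity
    have : 0 < t ^ 2 := by positivity
    linarith
  have hinner : ∑ r, a r * H' r j₀
      = (∑ r, a r * H r j₀) / √(∑ i, (H i j₀ + t * b i) ^ 2) := by
    simp only [hcol, mul_div_assoc', ← Finset.sum_div]
    congr 1
    have : ∀ r, a r * (H r j₀ + t * b r) = a r * H r j₀ + t * (a r * b r) := fun r => by ring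
    simp only [this, Finset.sum_add_distrib, ← Finset.mul_sum, hba]
    ring
  rw [hinner, sub_eq_zero, div_eq_iff (by linarith)] at heq
  have : √(∑ i, (H i j₀ + t * b i) ^ 2) = 1 := by
    have h := mul_left_cancel₀ hc ((mul_one _).trans heq)
    exact h.symm
  linarith

/-- At a local minimizer, every vector orthogonal to all `w_ℓ` is orthogonal to all `h_j`. -/
lemma orth_H (hK : 2 ≤ K) (hn : 1 ≤ n) (hτ : 0 < τ) (hW : W ∈ OB d (Fin K))
    (hH : H ∈ OB d (Fin K × Fin n)) (hloc : LocMin τ W H) (a : Fin d → ℝ)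
    (haW : ∀ ℓ, ∑ r, a r * W r ℓ = 0) (j₀ : Fin K × Fin n) : ∑ r, a r * H r j₀ = 0 := by
  by_contra hc
  have hst := stationary_H hn hτ hW hH hloc j₀
  have hWa : ∀ ℓ, ∑ r, W r ℓ * a r = 0 := fun ℓ => by simpa only [mul_comm] using haW ℓ
  have hHa : ∑ r, H r j₀ * a r = ∑ r, a r * H r j₀ := by simp only [mul_comm]
  -- Otherwise the multiplier of the constraint `|h_{j₀}| = 1` vanishes.
  have hβ : ∑ ℓ, grad τ W H j₀ ℓ * ∑ r, W r ℓ * H r j₀ = 0 := by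
    have h := hst a
    simp only [hWa, hHa, zero_sub, mul_neg, Finset.sum_neg_distrib, neg_eq_zero, ← mul_assoc,
      ← Finset.sum_mul] at h
    exact (mul_eq_zero.1 h).resolve_right hc
  have hzero : ∀ b : Fin d → ℝ, ∑ ℓ, grad τ W H j₀ ℓ * ∑ r, W r ℓ * b r = 0 := by
    intro b
    have h := hst b
    simp only [mul_sub, Finset.sum_sub_distrib, ← mul_assoc] at h
    rw [← Finset.sum_mul] at h
    simpa [hβ] using h
  -- Then `w_k` is a convex combination, with positive weights, of the unit vectors `w_ℓ`.
  have hconv := hzero (fun r => W r j₀.1)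
  have hsq1 : ∑ r, W r j₀.1 * W r j₀.1 = 1 := by simpa [sq] using hW j₀.1
  unfold grad at hconv
  rw [gCE_sum_mul, hsq1, ← smax_sum (logit τ W H j₀), ← Finset.sum_sub_distrib] at hconv
  have hnn : ∀ ℓ, smax (logit τ W H j₀) ℓ - smax (logit τ W H j₀) ℓ * ∑ r, W r ℓ * W r j₀.1
      = smax (logit τ W H j₀) ℓ * ((∑ r, (W r ℓ - W r j₀.1) ^ 2) / 2) := by
    intro ℓ
    have : ∑ r, (W r ℓ - W r j₀.1) ^ 2
        = ∑ r, W r ℓ ^ 2 - 2 * ∑ r, W r ℓ * W r j₀.1 + ∑ r, W r j₀.1 ^ 2 := by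
      simp only [Finset.mul_sum, ← Finset.sum_sub_distrib, ← Finset.sum_add_distrib]
      exact Finset.sum_congr rfl fun r _ => by ring
    rw [this, hW ℓ, hW j₀.1]
    ring
  have hnn0 : ∀ ℓ, 0 ≤ smax (logit τ W H j₀) ℓ * ((∑ r, (W r ℓ - W r j₀.1) ^ 2) / 2) := fun ℓ =>
    mul_nonneg (smax_pos _ _).le (div_nonneg (Finset.sum_nonneg fun r _ => sq_nonneg _) (by simp))
  have hsum : ∑ ℓ, smax (logit τ W H j₀) ℓ * ((∑ r, (W r ℓ - W r j₀.1) ^ 2) / 2) = 0 := by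
    rw [← neg_eq_zero, ← hconv, ← Finset.sum_neg_distrib]
    exact Finset.sum_congr rfl fun ℓ _ => by rw [← hnn]; ring
  have hw : ∀ r ℓ, W r ℓ = W r j₀.1 := by
    intro r ℓ
    have h1 := (Finset.sum_eq_zero_iff_of_nonneg fun ℓ _ => hnn0 ℓ).1 hsum ℓ (Finset.mem_univ ℓ)
    have h2 := (mul_eq_zero.1 h1).resolve_left (smax_pos _ _).ne'
    have h3 := (Finset.sum_eq_zero_iff_of_nonneg fun r _ => sq_nonneg (W r ℓ - W r j₀.1)).1
      (by linarith) r (Finset.mem_univ r)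
    exact sub_eq_zero.1 (pow_eq_zero_iff two_ne_zero |>.1 h3)
  exact hc (orth_of_const hK hn hτ hW hH hloc hw a (hWa j₀.1) j₀)

/-- A local minimizer is global. The second-order form, evaluated at the rows of `(W', H')` and
summed, is the first-order term of the convex loss between the two logit matrices. -/
lemma global_of_locMin (hK : 2 ≤ K) (hdK : K < d) (hn : 1 ≤ n) (hτ : 0 < τ)
    (hW : W ∈ OB d (Fin K)) (hH : H ∈ OB d (Fin K × Fin n)) (hloc : LocMin τ W H)
    {W' : Matrix (Fin d) (Fin K) ℝ} {H' : Matrix (Fin d) (Fin K × Fin n) ℝ}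
    (hW' : W' ∈ OB d (Fin K)) (hH' : H' ∈ OB d (Fin K × Fin n)) :
    ceRisk τ W H ≤ ceRisk τ W' H' := by
  obtain ⟨a, ha, haW⟩ := exists_orth hdK W
  have haH := orth_H hK hn hτ hW hH hloc a haW
  have h0 : 0 ≤ ∑ r, ∑ j, ∑ ℓ, grad τ W H j ℓ * (W' r ℓ * H' r j -
      (∑ r, W r ℓ * H r j) * ((W' r ℓ ^ 2 + H' r j ^ 2) / 2)) :=
    Finset.sum_nonneg fun r _ => second_order hn hτ hW hH hloc a ha haW haH _ _
  have h1 : ∑ r, ∑ j, ∑ ℓ, grad τ W H j ℓ * (W' r ℓ * H' r j -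
      (∑ r, W r ℓ * H r j) * ((W' r ℓ ^ 2 + H' r j ^ 2) / 2))
      = ∑ j, ∑ ℓ, grad τ W H j ℓ * (∑ r, W' r ℓ * H' r j - ∑ r, W r ℓ * H r j) := by
    rw [Finset.sum_comm]
    refine Finset.sum_congr rfl fun j _ => ?_
    rw [Finset.sum_comm]
    refine Finset.sum_congr rfl fun ℓ _ => ?_
    rw [← Finset.mul_sum, Finset.sum_sub_distrib, ← Finset.mul_sum, ← Finset.sum_div,
      Finset.sum_add_distrib, hW' ℓ, hH' j]
    ring
  have h2 : ∑ j, ∑ ℓ, grad τ W H j ℓ * (logit τ W' H' j ℓ - logit τ W H j ℓ)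
      = τ * ∑ j, ∑ ℓ, grad τ W H j ℓ * (∑ r, W' r ℓ * H' r j - ∑ r, W r ℓ * H r j) := by
    simp only [Finset.mul_sum (s := (Finset.univ : Finset (Fin K × Fin n))),
      Finset.mul_sum (s := (Finset.univ : Finset (Fin K)))]
    exact Finset.sum_congr rfl fun j _ => Finset.sum_congr rfl fun ℓ _ => by
      simp only [logit]; ring
  rw [h1] at h0
  have h3 : 0 ≤ ∑ j, ∑ ℓ, grad τ W H j ℓ * (logit τ W' H' j ℓ - logit τ W H j ℓ) := by
    rw [h2]; exact mul_nonneg hτ.le h0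
  have h4 := Finset.sum_le_sum fun j (_ : j ∈ Finset.univ) =>
    LCE_convex (logit τ W H j) (logit τ W' H' j) j.1
  rw [Finset.sum_add_distrib] at h4
  rw [ceRisk_eq, ceRisk_eq]
  refine mul_le_mul_of_nonneg_left ?_ (by positivity)
  unfold grad at h3
  linarith

end

theorem local_min_is_global (d K n : ℕ) (hK : 2 ≤ K) (hdK : K < d) (hn : 1 ≤ n)
    (τ : ℝ) (hτ : 0 < τ)
    (hτ' : τ < 2 * ((d : ℝ) - 2) / (1 + ((K % 2 : ℕ) : ℝ) / (K : ℝ)))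
    (W : Matrix (Fin d) (Fin K) ℝ) (H : Matrix (Fin d) (Fin K × Fin n) ℝ)
    (hW : W ∈ OB d (Fin K)) (hH : H ∈ OB d (Fin K × Fin n))
    (hloc : IsLocalMinOn (fun p : Matrix (Fin d) (Fin K) ℝ × Matrix (Fin d) (Fin K × Fin n) ℝ =>
        ceRisk τ p.1 p.2)
      {p : Matrix (Fin d) (Fin K) ℝ × Matrix (Fin d) (Fin K × Fin n) ℝ |
        p.1 ∈ OB d (Fin K) ∧ p.2 ∈ OB d (Fin K × Fin n)}
      (W, H)) :
    (∀ (W' : Matrix (Fin d) (Fin K) ℝ) (H' : Matrix (Fin d) (Fin K × Fin n) ℝ),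
        W' ∈ OB d (Fin K) → H' ∈ OB d (Fin K × Fin n) → ceRisk τ W H ≤ ceRisk τ W' H') ∧
    ceRisk τ W H
      = Real.log (1 + ((K : ℝ) - 1) * Real.exp (-((K : ℝ) * τ) / ((K : ℝ) - 1))) ∧
    NeuralCollapse W H := by
  have : NeZero K := ⟨by omega⟩
  have hglob : ∀ (W' : Matrix (Fin d) (Fin K) ℝ) (H' : Matrix (Fin d) (Fin K × Fin n) ℝ),
      W' ∈ OB d (Fin K) → H' ∈ OB d (Fin K × Fin n) → ceRisk τ W H ≤ ceRisk τ W' H' :=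
    fun W' H' hW' hH' => global_of_locMin hK hdK hn hτ hW hH hloc hW' hH'
  obtain ⟨W₀, H₀, hW₀, hH₀, h₀⟩ := exists_risk_le (d := d) hK hdK hn τ
  exact ⟨hglob, collapse_of_le hK hn τ hτ W H hW hH ((hglob W₀ H₀ hW₀ hH₀).trans_eq h₀)⟩
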